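/- Factorization of differences of elliptic Faber generating functions (identity (den3)): Let τ lie in the complex upper half-plane and let u, ξ_i, ξ_j ∈ ℂ be such that all theta-function values appearing in denominators below are nonzero. Then S'(u+ξ_j,τ)/S'(ξ_j,τ) − S'(u+ξ_i,τ)/S'(ξ_i,τ) = [ θ₂(u+ξ_i+ξ_j, τ)·θ₃(u+ξ_i+ξ_j, τ)·θ₁(u, τ)·θ₄(u, τ) / ( θ₁(u+ξ_i, τ)·θ₄(u+ξ_i, τ)·θ₁(u+ξ_j, τ)·θ₄(u+ξ_j, τ) ) ] · [ θ₁(ξ_j−ξ_i, τ/2)·θ₂(0, τ/2) / ( θ₂(ξ_i, τ/2)·θ₂(ξ_j, τ/2) ) ]. -/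

import Mathlib

open Complex

/-- Jacobi theta function θ₁(u,τ). -/
noncomputable def theta1 (u τ : ℂ) : ℂ :=
  -∑' k : ℤ, Complex.exp ((Real.pi : ℂ) * Complex.I * τ * ((k : ℂ) + 1/2)^2
      + 2 * (Real.pi : ℂ) * Complex.I * (u + 1/2) * ((k : ℂ) + 1/2))

/-- Jacobi theta function θ₂(u,τ). -/
noncomputable def theta2 (u τ : ℂ) : ℂ :=
  ∑' k : ℤ, Complex.exp ((Real.pi : ℂ) * Complex.I * τ * ((k : ℂ) + 1/2)^2
      + 2 * (Real.pi : ℂ) * Complex.I * u * ((k : ℂ) + 1/2))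

/-- Jacobi theta function θ₃(u,τ). -/
noncomputable def theta3 (u τ : ℂ) : ℂ :=
  ∑' k : ℤ, Complex.exp ((Real.pi : ℂ) * Complex.I * τ * (k : ℂ)^2
      + 2 * (Real.pi : ℂ) * Complex.I * u * (k : ℂ))

/-- Jacobi theta function θ₄(u,τ). -/
noncomputable def theta4 (u τ : ℂ) : ℂ :=
  ∑' k : ℤ, Complex.exp ((Real.pi : ℂ) * Complex.I * τ * (k : ℂ)^2
      + 2 * (Real.pi : ℂ) * Complex.I * (u + 1/2) * (k : ℂ))

/-- ζ_a(u,τ) = θ_a'(u,τ)/θ_a(u,τ). -/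
noncomputable def zeta1 (u τ : ℂ) : ℂ := deriv (fun v => theta1 v τ) u / theta1 u τ
noncomputable def zeta2 (u τ : ℂ) : ℂ := deriv (fun v => theta2 v τ) u / theta2 u τ
noncomputable def zeta3 (u τ : ℂ) : ℂ := deriv (fun v => theta3 v τ) u / theta3 u τ
noncomputable def zeta4 (u τ : ℂ) : ℂ := deriv (fun v => theta4 v τ) u / theta4 u τ

/-- ℘_a(u,τ) = −∂_u ζ_a(u,τ). -/
noncomputable def wp1 (u τ : ℂ) : ℂ := -deriv (fun v => zeta1 v τ) u
noncomputable def wp2 (u τ : ℂ) : ℂ := -deriv (fun v => zeta2 v τ) u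
noncomputable def wp1' (u τ : ℂ) : ℂ := deriv (fun v => wp1 v τ) u
noncomputable def wp2' (u τ : ℂ) : ℂ := deriv (fun v => wp2 v τ) u

/-- S'(u,τ) = ζ₁(u,τ) − ζ₄(u,τ). -/
noncomputable def Sp (u τ : ℂ) : ℂ := zeta1 u τ - zeta4 u τ
/-- S''(u,τ) = ∂_u S'(u,τ). -/
noncomputable def Spp (u τ : ℂ) : ℂ := deriv (fun v => Sp v τ) u
/-- S'''(u,τ) = ∂_u S''(u,τ). -/
noncomputable def Sppp (u τ : ℂ) : ℂ := deriv (fun v => Spp v τ) u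

/-- Partial derivative in the j-th coordinate of a ℂ-valued function on ℝ^N. -/
noncomputable def pdC {N : ℕ} (j : Fin N) (f : (Fin N → ℝ) → ℂ) (x : Fin N → ℝ) : ℂ :=
  fderiv ℝ f x (Pi.single j 1)

/-- Partial derivative in the j-th coordinate of an ℝ-valued function on ℝ^d. -/
noncomputable def pd {d : ℕ} (j : Fin d) (f : (Fin d → ℝ) → ℝ) (x : Fin d → ℝ) : ℝ :=
  fderiv ℝ f x (Pi.single j 1)

/-!
Splitting a double sum over `ℤ × ℤ` by the parity of `p - q` gives
`θ₁(x, τ/2) θ₂(y, τ/2) = θ₁(x+y, τ) θ₄(x-y, τ) + θ₄(x+y, τ) θ₁(x-y, τ)`.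
Differentiated on the diagonal, this identity evaluates the Wronskian of `θ₁` and `θ₄`, so that
`S'(x, τ)` is a constant multiple of `θ₂(x, τ/2) / θ₁(x, τ/2)`. The difference of two values of
`S'(u+ξ) / S'(ξ)` is therefore governed by an addition formula for `θ₁` and `θ₂` at `τ / 2`, which
the same identity turns into polynomial algebra in `θ₁` and `θ₄` at `τ`.
-/

theorem hasSum_int_prod_of_parity {α : Type*} [AddCommMonoid α] [TopologicalSpace α]
    [ContinuousAdd α] {f : ℤ × ℤ → α} {a b : α}
    (ha : HasSum (fun x : ℤ × ℤ => f (x.1 + x.2, x.1 - x.2)) a)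
    (hb : HasSum (fun x : ℤ × ℤ => f (x.1 + x.2, x.1 - x.2 - 1)) b) :
    HasSum f (a + b) := by
  let even : ℤ × ℤ → ℤ × ℤ := fun x => (x.1 + x.2, x.1 - x.2)
  let odd : ℤ × ℤ → ℤ × ℤ := fun x => (x.1 + x.2, x.1 - x.2 - 1)
  have even_inj : Function.Injective even := by
    rintro ⟨m, n⟩ ⟨m', n'⟩ h
    simp only [even, Prod.mk.injEq] at h ⊢
    omega
  have odd_inj : Function.Injective odd := by
    rintro ⟨m, n⟩ ⟨m', n'⟩ h
    simp only [odd, Prod.mk.injEq] at h ⊢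
    omega
  have ranges_compl : IsCompl (Set.range even) (Set.range odd) := by
    refine ⟨Set.disjoint_range_iff.2 ?_, codisjoint_iff.2 (Set.eq_univ_iff_forall.2 ?_)⟩
    · rintro ⟨m, n⟩ ⟨m', n'⟩ h
      simp only [even, odd, Prod.mk.injEq] at h
      omega
    · rintro ⟨p, q⟩
      rcases Int.even_or_odd' (p - q) with ⟨n, h | h⟩
      · exact .inl ⟨(p - n, n), by simp only [even, Prod.mk.injEq]; omega⟩
      · exact .inr ⟨(p - n, n), by simp only [odd, Prod.mk.injEq]; omega⟩
  exact HasSum.add_isCompl ranges_compl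
    (even_inj.hasSum_range_iff.2 ha) (odd_inj.hasSum_range_iff.2 hb)

theorem hasSum_prod_mul {ι κ R : Type*} [NormedRing R] [NormedSpace ℝ R] [FiniteDimensional ℝ R]
    {f : ι → R} {g : κ → R} {a b : R} (hf : HasSum f a) (hg : HasSum g b) :
    HasSum (fun x : ι × κ => f x.1 * g x.2) (a * b) :=
  have := FiniteDimensional.complete ℝ R
  hf.mul hg (summable_mul_of_summable_norm hf.summable.norm hg.summable.norm)

theorem im_div_two_pos {τ : ℂ} (hτ : 0 < τ.im) : 0 < (τ / 2).im := by
  simpa using hτ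

theorem theta1_eq_neg_theta2 (u τ : ℂ) : theta1 u τ = -theta2 (u + 1 / 2) τ := rfl

theorem theta4_eq_theta3 (u τ : ℂ) : theta4 u τ = theta3 (u + 1 / 2) τ := rfl

theorem theta3_eq_jacobiTheta₂ (u τ : ℂ) : theta3 u τ = jacobiTheta₂ u τ :=
  tsum_congr fun k => by rw [jacobiTheta₂_term]; ring_nf

theorem theta2_term_eq_exp_mul_jacobiTheta₂_term (u τ : ℂ) (k : ℤ) :
    exp (Real.pi * I * τ * (k + 1 / 2) ^ 2 + 2 * Real.pi * I * u * (k + 1 / 2)) =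
      exp (Real.pi * I * τ / 4 + Real.pi * I * u) * jacobiTheta₂_term k (u + τ / 2) τ := by
  rw [jacobiTheta₂_term, ← exp_add]
  ring_nf

theorem theta2_eq_exp_mul_jacobiTheta₂ (u τ : ℂ) :
    theta2 u τ = exp (Real.pi * I * τ / 4 + Real.pi * I * u) * jacobiTheta₂ (u + τ / 2) τ := by
  rw [theta2, jacobiTheta₂, ← tsum_mul_left]
  exact tsum_congr (theta2_term_eq_exp_mul_jacobiTheta₂_term u τ)

theorem theta3_neg (u τ : ℂ) : theta3 (-u) τ = theta3 u τ := by
  simp only [theta3_eq_jacobiTheta₂, jacobiTheta₂_neg_left]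

theorem theta3_add_one (u τ : ℂ) : theta3 (u + 1) τ = theta3 u τ := by
  simp only [theta3_eq_jacobiTheta₂, jacobiTheta₂_add_left]

theorem theta2_neg (u τ : ℂ) : theta2 (-u) τ = theta2 u τ := by
  rw [theta2, theta2, ← (Equiv.subLeft (-1 : ℤ)).tsum_eq]
  refine tsum_congr fun k => ?_
  rw [Equiv.subLeft_apply]
  push_cast
  ring_nf

theorem theta2_add_one (u τ : ℂ) : theta2 (u + 1) τ = -theta2 u τ := by
  have exp_shift : exp (Real.pi * I * τ / 4 + Real.pi * I * (u + 1)) =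
      -exp (Real.pi * I * τ / 4 + Real.pi * I * u) := by
    rw [mul_add_one, ← add_assoc, exp_add, exp_pi_mul_I, mul_neg_one]
  rw [theta2_eq_exp_mul_jacobiTheta₂, theta2_eq_exp_mul_jacobiTheta₂, exp_shift,
    add_right_comm, jacobiTheta₂_add_left, neg_mul]

theorem theta1_neg (u τ : ℂ) : theta1 (-u) τ = -theta1 u τ := by
  rw [theta1_eq_neg_theta2, theta1_eq_neg_theta2, ← theta2_neg, ← theta2_add_one]
  ring_nf

theorem theta4_neg (u τ : ℂ) : theta4 (-u) τ = theta4 u τ := by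
  rw [theta4_eq_theta3, theta4_eq_theta3, ← theta3_neg, ← theta3_add_one]
  ring_nf

theorem theta1_zero (τ : ℂ) : theta1 0 τ = 0 := by
  simpa [self_eq_neg] using theta1_neg 0 τ

section UpperHalfPlane

variable {τ : ℂ}

theorem hasSum_theta2 (u : ℂ) (hτ : 0 < τ.im) :
    HasSum (fun k : ℤ =>
      exp (Real.pi * I * τ * (k + 1 / 2) ^ 2 + 2 * Real.pi * I * u * (k + 1 / 2)))
      (theta2 u τ) := by
  simp_rw [theta2_eq_exp_mul_jacobiTheta₂, theta2_term_eq_exp_mul_jacobiTheta₂_term]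
  exact (hasSum_jacobiTheta₂_term _ hτ).mul_left _

theorem hasSum_theta3 (u : ℂ) (hτ : 0 < τ.im) :
    HasSum (fun k : ℤ => exp (Real.pi * I * τ * k ^ 2 + 2 * Real.pi * I * u * k))
      (theta3 u τ) := by
  rw [theta3_eq_jacobiTheta₂]
  refine (hasSum_jacobiTheta₂_term u hτ).congr_fun fun k => ?_
  rw [jacobiTheta₂_term, add_comm]
  ring_nf

theorem differentiable_jacobiTheta₂ (hτ : 0 < τ.im) :
    Differentiable ℂ fun u => jacobiTheta₂ u τ :=
  fun u => differentiableAt_jacobiTheta₂_fst u hτ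

theorem differentiable_theta2 (hτ : 0 < τ.im) : Differentiable ℂ fun u => theta2 u τ := by
  have := (differentiable_jacobiTheta₂ hτ).comp (differentiable_id.add_const (τ / 2))
  simp_rw [theta2_eq_exp_mul_jacobiTheta₂]
  exact Differentiable.mul (by fun_prop) this

theorem differentiable_theta1 (hτ : 0 < τ.im) : Differentiable ℂ fun u => theta1 u τ :=
  ((differentiable_theta2 hτ).comp (differentiable_id.add_const (1 / 2))).neg

theorem differentiable_theta4 (hτ : 0 < τ.im) : Differentiable ℂ fun u => theta4 u τ := by
  simp_rw [theta4_eq_theta3, theta3_eq_jacobiTheta₂]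
  exact (differentiable_jacobiTheta₂ hτ).comp (differentiable_id.add_const (1 / 2))

theorem theta2_half_mul_theta2_half (x y : ℂ) (hτ : 0 < τ.im) :
    theta2 x (τ / 2) * theta2 y (τ / 2) =
      theta2 (x + y) τ * theta3 (x - y) τ + theta3 (x + y) τ * theta2 (x - y) τ := by
  have hτ' := im_div_two_pos hτ
  refine (hasSum_prod_mul (hasSum_theta2 x hτ') (hasSum_theta2 y hτ')).unique
    (hasSum_int_prod_of_parity ?_ ?_)
  · refine (hasSum_prod_mul (hasSum_theta2 (x + y) hτ) (hasSum_theta3 (x - y) hτ)).congr_fun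
      fun k => ?_
    simp only [← exp_add]
    push_cast
    ring_nf
  · refine (hasSum_prod_mul (hasSum_theta3 (x + y) hτ) (hasSum_theta2 (x - y) hτ)).congr_fun
      fun k => ?_
    simp only [← exp_add]
    push_cast
    ring_nf

theorem theta1_half_mul_theta2_half (x y : ℂ) (hτ : 0 < τ.im) :
    theta1 x (τ / 2) * theta2 y (τ / 2) =
      theta1 (x + y) τ * theta4 (x - y) τ + theta4 (x + y) τ * theta1 (x - y) τ := by
  have h := theta2_half_mul_theta2_half (x + 1 / 2) y hτ
  rw [add_right_comm, add_sub_right_comm] at h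
  simp only [theta1_eq_neg_theta2, theta4_eq_theta3]
  linear_combination -h

theorem theta1_mul_theta4 (x : ℂ) (hτ : 0 < τ.im) :
    theta1 x τ * theta4 x τ = theta1 x (τ / 2) * theta2 0 (τ / 2) / 2 := by
  rw [theta1_half_mul_theta2_half x 0 hτ, add_zero, sub_zero]
  ring

theorem theta2_mul_theta3 (x : ℂ) (hτ : 0 < τ.im) :
    theta2 x τ * theta3 x τ = theta2 x (τ / 2) * theta2 0 (τ / 2) / 2 := by
  rw [theta2_half_mul_theta2_half x 0 hτ, add_zero, sub_zero]
  ring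

theorem theta1_mul_theta4_sub_theta4_mul_theta1 (x y : ℂ) (hτ : 0 < τ.im) :
    theta1 x τ * theta4 y τ - theta4 x τ * theta1 y τ =
      theta1 ((x - y) / 2) (τ / 2) * theta2 ((x + y) / 2) (τ / 2) := by
  rw [theta1_half_mul_theta2_half _ _ hτ, show (x - y) / 2 + (x + y) / 2 = x by ring,
    show (x - y) / 2 - (x + y) / 2 = -y by ring, theta1_neg, theta4_neg]
  ring

theorem wronskian_theta1_theta4 (x : ℂ) (hτ : 0 < τ.im) :
    deriv (theta1 · τ) x * theta4 x τ - deriv (theta4 · τ) x * theta1 x τ =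
      deriv (theta1 · (τ / 2)) 0 / 2 * theta2 x (τ / 2) := by
  have hτ' := im_div_two_pos hτ
  have deriv_lhs : HasDerivAt (fun v => theta1 v τ * theta4 x τ - theta4 v τ * theta1 x τ)
      (deriv (theta1 · τ) x * theta4 x τ - deriv (theta4 · τ) x * theta1 x τ) x :=
    ((differentiable_theta1 hτ x).hasDerivAt.mul_const _).sub
      ((differentiable_theta4 hτ x).hasDerivAt.mul_const _)
  have deriv_theta1 : HasDerivAt (fun v => theta1 ((v - x) / 2) (τ / 2))
      (deriv (theta1 · (τ / 2)) 0 * (1 / 2)) x :=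
    (differentiable_theta1 hτ' 0).hasDerivAt.comp_of_eq x
      (((hasDerivAt_id x).sub_const x).div_const 2) (by simp)
  have deriv_theta2 : HasDerivAt (fun v => theta2 ((v + x) / 2) (τ / 2))
      (deriv (theta2 · (τ / 2)) x * (1 / 2)) x :=
    (differentiable_theta2 hτ' x).hasDerivAt.comp_of_eq x
      (((hasDerivAt_id x).add_const x).div_const 2) (by simp)
  simp_rw [theta1_mul_theta4_sub_theta4_mul_theta1 _ _ hτ] at deriv_lhs
  rw [deriv_lhs.unique (deriv_theta1.mul deriv_theta2), sub_self, zero_div, theta1_zero,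
    add_self_div_two]
  ring

theorem theta1_half_ne_zero {x : ℂ} (hτ : 0 < τ.im) (h1 : theta1 x τ ≠ 0)
    (h4 : theta4 x τ ≠ 0) : theta1 x (τ / 2) ≠ 0 := by
  have h := mul_ne_zero h1 h4
  rw [theta1_mul_theta4 x hτ] at h
  exact left_ne_zero_of_mul (div_ne_zero_iff.1 h).1

theorem theta2_zero_half_ne_zero {x : ℂ} (hτ : 0 < τ.im) (h1 : theta1 x τ ≠ 0)
    (h4 : theta4 x τ ≠ 0) : theta2 0 (τ / 2) ≠ 0 := by
  have h := mul_ne_zero h1 h4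
  rw [theta1_mul_theta4 x hτ] at h
  exact right_ne_zero_of_mul (div_ne_zero_iff.1 h).1

theorem Sp_eq {x : ℂ} (hτ : 0 < τ.im) (h1 : theta1 x τ ≠ 0) (h4 : theta4 x τ ≠ 0) :
    Sp x τ = deriv (theta1 · (τ / 2)) 0 / theta2 0 (τ / 2) *
      (theta2 x (τ / 2) / theta1 x (τ / 2)) := by
  rw [Sp, zeta1, zeta4, div_sub_div _ _ h1 h4, mul_comm (theta1 x τ) (deriv _ x),
    wronskian_theta1_theta4 x hτ, theta1_mul_theta4 x hτ, div_mul_eq_mul_div,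
    div_div_div_cancel_right₀ two_ne_zero, div_mul_div_comm, mul_comm (theta1 x _)]

theorem Sp_div_Sp {x y : ℂ} (hτ : 0 < τ.im) (hx1 : theta1 x τ ≠ 0) (hx4 : theta4 x τ ≠ 0)
    (hy1 : theta1 y τ ≠ 0) (hy4 : theta4 y τ ≠ 0) (hy : Sp y τ ≠ 0) :
    Sp x τ / Sp y τ = theta2 x (τ / 2) * theta1 y (τ / 2) /
      (theta1 x (τ / 2) * theta2 y (τ / 2)) := by
  rw [Sp_eq hτ hy1 hy4] at hy ⊢
  rw [Sp_eq hτ hx1 hx4, mul_div_mul_left _ _ (left_ne_zero_of_mul hy), div_div_div_eq]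

theorem theta1_theta2_addition_formula (u a b : ℂ) (hτ : 0 < τ.im) :
    theta2 (u + b) τ * theta1 b τ * (theta1 (u + a) τ * theta2 a τ) -
        theta2 (u + a) τ * theta1 a τ * (theta1 (u + b) τ * theta2 b τ) =
      theta2 (u + a + b) τ * theta1 u τ * theta1 (b - a) τ * theta2 0 τ := by
  obtain ⟨σ, rfl⟩ : ∃ σ, τ = σ / 2 := ⟨2 * τ, by ring⟩
  have hσ : 0 < σ.im := by simpa using hτ
  have sub_product (x : ℂ) : theta1 (u + 2 * x) σ * theta4 u σ - theta4 (u + 2 * x) σ * theta1 u σ =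
      theta1 x (σ / 2) * theta2 (u + x) (σ / 2) := by
    rw [theta1_mul_theta4_sub_theta4_mul_theta1 _ _ hσ]
    ring_nf
  have add_product (x : ℂ) : theta1 (u + 2 * x) σ * theta4 u σ + theta4 (u + 2 * x) σ * theta1 u σ =
      theta1 (u + x) (σ / 2) * theta2 x (σ / 2) := by
    rw [theta1_half_mul_theta2_half _ _ hσ]
    ring_nf
  have mixed_product : theta1 (u + 2 * b) σ * theta4 (u + 2 * a) σ -
      theta4 (u + 2 * b) σ * theta1 (u + 2 * a) σ =
      theta1 (b - a) (σ / 2) * theta2 (u + a + b) (σ / 2) := by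
    rw [theta1_mul_theta4_sub_theta4_mul_theta1 _ _ hσ]
    ring_nf
  calc
    _ = theta1 b (σ / 2) * theta2 (u + b) (σ / 2) * (theta1 (u + a) (σ / 2) * theta2 a (σ / 2)) -
        theta1 a (σ / 2) * theta2 (u + a) (σ / 2) *
          (theta1 (u + b) (σ / 2) * theta2 b (σ / 2)) := by ring
    _ = 2 * (theta1 u σ * theta4 u σ) * (theta1 (u + 2 * b) σ * theta4 (u + 2 * a) σ -
        theta4 (u + 2 * b) σ * theta1 (u + 2 * a) σ) := by
      rw [← sub_product a, ← sub_product b, ← add_product a, ← add_product b]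
      ring
    _ = _ := by
      rw [mixed_product, theta1_mul_theta4 u hσ]
      ring

end UpperHalfPlane

/-- Factorization of differences of elliptic Faber generating functions
(identity (den3)). -/
theorem faber_difference_factorization (τ u ξi ξj : ℂ) (hτ : 0 < τ.im)
    (h1 : theta1 ξi τ ≠ 0) (h2 : theta4 ξi τ ≠ 0)
    (h3 : theta1 ξj τ ≠ 0) (h4 : theta4 ξj τ ≠ 0)
    (h5 : theta1 (u + ξi) τ ≠ 0) (h6 : theta4 (u + ξi) τ ≠ 0)
    (h7 : theta1 (u + ξj) τ ≠ 0) (h8 : theta4 (u + ξj) τ ≠ 0)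
    (h9 : theta2 ξi (τ / 2) ≠ 0) (h10 : theta2 ξj (τ / 2) ≠ 0)
    (h11 : Sp ξi τ ≠ 0) (h12 : Sp ξj τ ≠ 0) :
    Sp (u + ξj) τ / Sp ξj τ - Sp (u + ξi) τ / Sp ξi τ
      = (theta2 (u + ξi + ξj) τ * theta3 (u + ξi + ξj) τ * theta1 u τ * theta4 u τ
            / (theta1 (u + ξi) τ * theta4 (u + ξi) τ
                * theta1 (u + ξj) τ * theta4 (u + ξj) τ))
        * (theta1 (ξj - ξi) (τ / 2) * theta2 0 (τ / 2)
            / (theta2 ξi (τ / 2) * theta2 ξj (τ / 2))) := by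
  have hi := theta1_half_ne_zero hτ h5 h6
  have hj := theta1_half_ne_zero hτ h7 h8
  have h0 := theta2_zero_half_ne_zero hτ h1 h2
  have theta_quotient :
      theta2 (u + ξi + ξj) τ * theta3 (u + ξi + ξj) τ * theta1 u τ * theta4 u τ
          / (theta1 (u + ξi) τ * theta4 (u + ξi) τ * theta1 (u + ξj) τ * theta4 (u + ξj) τ)
        = theta2 (u + ξi + ξj) (τ / 2) * theta1 u (τ / 2)
          / (theta1 (u + ξi) (τ / 2) * theta1 (u + ξj) (τ / 2)) := by
    rw [mul_assoc _ (theta1 u τ), mul_assoc _ (theta1 (u + ξj) τ), theta2_mul_theta3 _ hτ,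
      theta1_mul_theta4 u hτ, theta1_mul_theta4 _ hτ, theta1_mul_theta4 _ hτ]
    field_simp
  rw [Sp_div_Sp hτ h7 h8 h3 h4 h12, Sp_div_Sp hτ h5 h6 h1 h2 h11,
    div_sub_div _ _ (mul_ne_zero hj h10) (mul_ne_zero hi h9),
    mul_comm (theta1 (u + ξj) _ * _) (theta2 (u + ξi) _ * _),
    theta1_theta2_addition_formula u ξi ξj (im_div_two_pos hτ), theta_quotient, div_mul_div_comm]
  ring
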